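/- arXiv:2408.00514 — 2 statements merged into one kernel-verified Lean document; each statement's English description precedes it below -/
import Mathlib

section
/- Let E be a cartesian closed category with finite limits, let S be an elementary topos with subobject classifier 2, and let R : S → E be a fully faithful functor with a finite-product preserving left adjoint L : E → S. Then for a morphism f : W → X in E the following are equivalent: (1) f is internally orthogonal to R 2, i.e., (R 2)^f is an isomorphism; (2) L f : L W → L X is an isomorphism in S; (3) for every object A of S, f is internally orthogonal to R A. -/
open CategoryTheory Category Limits MonoidalCategory

universe u v u' v'

/-- A subobject classifier for a category with a (chosen) terminal object. -/
structure Classifier (E : Type u) [Category.{v} E] [CartesianMonoidalCategory E] where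
  Ω : E
  truth : 𝟙_ E ⟶ Ω
  classifies : ∀ {U X : E} (m : U ⟶ X), Mono m →
    ∃! χ : X ⟶ Ω, IsPullback (CartesianMonoidalCategory.toUnit U) m truth χ

/-!
Internal orthogonality of `f` to `R A` says that `f ▷ Y` is orthogonal to `R A` for every `Y`.
By adjunction, and because `L` preserves binary products, this means that `L f ▷ L Y` is orthogonal
to `A`; in particular it holds if `L f` is invertible. Conversely, let `g = L f : A ⟶ B` and take
`Ω` for the target. Extending the equality predicate of `A` along `g ▷ A` shows that `g` is a
monomorphism. Its characteristic map is constantly true after precomposition with `g`, hence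
constantly true, so `g` is an isomorphism. The two steps test `f ▷ Y` at `Y = W` and at the
unit, respectively.
-/

open CartesianMonoidalCategory

section Orthogonality

variable {C : Type u} [Category.{v} C]

theorem bijective_comp_iff_of_arrow_iso {A B A' B' : C} {f : A ⟶ B} {g : A' ⟶ B'}
    (e : Arrow.mk f ≅ Arrow.mk g) (Z : C) :
    Function.Bijective (fun k : B ⟶ Z ↦ f ≫ k) ↔
      Function.Bijective (fun k : B' ⟶ Z ↦ g ≫ k) := by
  simpa [ObjectProperty.isLocal] using
    (ObjectProperty.singleton Z).isLocal.arrow_mk_iso_iff e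

variable [MonoidalCategory C] {W X : C} (f : W ⟶ X) (Z : C)

theorem bijective_whiskerRight_unit_comp_iff :
    Function.Bijective (fun g : X ⊗ 𝟙_ C ⟶ Z ↦ f ▷ 𝟙_ C ≫ g) ↔
      Function.Bijective (fun g : X ⟶ Z ↦ f ≫ g) :=
  bijective_comp_iff_of_arrow_iso (Arrow.isoMk (ρ_ W) (ρ_ X)) Z

theorem isIso_pre_app_iff_bijective_whiskerRight_comp [Closed W] [Closed X] :
    IsIso ((MonoidalClosed.pre f).app Z) ↔
      ∀ Y : C, Function.Bijective (fun g : X ⊗ Y ⟶ Z ↦ f ▷ Y ≫ g) := by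
  rw [isIso_iff_yoneda_map_bijective]
  refine forall_congr' fun Y ↦ ?_
  have whiskerRight_comp_eq : (fun g : X ⊗ Y ⟶ Z ↦ f ▷ Y ≫ g) =
      ((ihom.adjunction W).homEquiv Y Z).symm ∘
        (fun h ↦ h ≫ (MonoidalClosed.pre f).app Z) ∘ (ihom.adjunction X).homEquiv Y Z := by
    funext g
    exact ((Equiv.symm_apply_eq _).2 (MonoidalClosed.curry_pre_app f g)).symm
  rw [whiskerRight_comp_eq, Equiv.comp_bijective, Equiv.bijective_comp]

end Orthogonality

namespace Classifier

variable {S : Type u} [Category.{v} S] [CartesianMonoidalCategory S] (c : _root_.Classifier S)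

/-- The characteristic map of a monomorphism, extracted from the existence clause of
`Classifier.classifies`. -/
noncomputable def χ {U X : S} (m : U ⟶ X) [Mono m] : X ⟶ c.Ω :=
  (c.classifies m inferInstance).choose

theorem isPullback_χ {U X : S} (m : U ⟶ X) [Mono m] :
    IsPullback (toUnit U) m c.truth (c.χ m) :=
  (c.classifies m inferInstance).choose_spec.1

theorem comp_χ_eq_truth_iff {T U X : S} (a : T ⟶ X) (m : U ⟶ X) [Mono m] :
    a ≫ c.χ m = toUnit T ≫ c.truth ↔ ∃ k : T ⟶ U, k ≫ m = a := by
  constructor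
  · intro h
    exact ⟨_, (c.isPullback_χ m).lift_snd (toUnit T) a h.symm⟩
  · rintro ⟨k, rfl⟩
    rw [assoc, ← (c.isPullback_χ m).w, comp_toUnit_assoc]

/-- The equality predicate on `A`: the characteristic map of the diagonal. -/
noncomputable def eqPredicate (A : S) : A ⊗ A ⟶ c.Ω :=
  c.χ (lift (𝟙 A) (𝟙 A))

theorem lift_comp_eqPredicate_eq_truth_iff {T A : S} (a b : T ⟶ A) :
    lift a b ≫ c.eqPredicate A = toUnit T ≫ c.truth ↔ a = b := by
  rw [eqPredicate, comp_χ_eq_truth_iff]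
  constructor
  · rintro ⟨k, hk⟩
    rw [comp_lift, comp_id] at hk
    rw [← lift_fst a b, ← hk, lift_fst, ← lift_snd a b, ← hk, lift_snd]
  · rintro rfl
    exact ⟨a, by simp⟩

variable {A B : S} {g : A ⟶ B}

theorem mono_of_whiskerRight_comp_eq_eqPredicate {θ : B ⊗ A ⟶ c.Ω}
    (hθ : g ▷ A ≫ θ = c.eqPredicate A) : Mono g where
  right_cancellation {T} a b hab := by
    rw [← c.lift_comp_eqPredicate_eq_truth_iff]
    calc lift a b ≫ c.eqPredicate A
        = lift (a ≫ g) b ≫ θ := by rw [← hθ, lift_whiskerRight_assoc]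
      _ = lift (b ≫ g) b ≫ θ := by rw [hab]
      _ = lift b b ≫ c.eqPredicate A := by rw [← hθ, lift_whiskerRight_assoc]
      _ = toUnit T ≫ c.truth := (c.lift_comp_eqPredicate_eq_truth_iff b b).2 rfl

theorem isIso_of_mono_of_injective_comp [Mono g]
    (hg : Function.Injective (fun k : B ⟶ c.Ω ↦ g ≫ k)) : IsIso g := by
  have χ_eq_truth : c.χ g = toUnit B ≫ c.truth := hg <| by
    simp only [← (c.isPullback_χ g).w, comp_toUnit_assoc]
  obtain ⟨k, hk⟩ := (c.comp_χ_eq_truth_iff (𝟙 B) g).1 (by rw [id_comp, χ_eq_truth])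
  have : IsSplitEpi g := ⟨⟨k, hk⟩⟩
  exact isIso_of_mono_of_isSplitEpi g

end Classifier

section ProductPreservingLeftAdjoint

variable {E : Type u} [Category.{v} E] [CartesianMonoidalCategory E]
  {S : Type u'} [Category.{v'} S] [CartesianMonoidalCategory S]
  {L : E ⥤ S} [PreservesLimitsOfShape (Discrete WalkingPair) L]
  {W X : E}

variable (L) in
/-- A functor preserving binary products commutes with `- ⊗ Y` on morphisms, up to the product
comparison isomorphisms. -/
noncomputable def mapWhiskerRightArrowIso (f : W ⟶ X) (Y : E) :
    Arrow.mk (L.map (f ▷ Y)) ≅ Arrow.mk (L.map f ▷ L.obj Y) :=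
  Arrow.isoMk (prodComparisonIso L W Y) (prodComparisonIso L X Y)
    (by simpa using! (prodComparison_natural_whiskerRight L f).symm)

variable {R : S ⥤ E} {f : W ⟶ X}

theorem bijective_map_whiskerRight_comp_iff (adj : L ⊣ R) (Y : E) (A : S) :
    Function.Bijective (fun k : L.obj X ⊗ L.obj Y ⟶ A ↦ L.map f ▷ L.obj Y ≫ k) ↔
      Function.Bijective (fun k : X ⊗ Y ⟶ R.obj A ↦ f ▷ Y ≫ k) := by
  rw [← bijective_comp_iff_of_arrow_iso (mapWhiskerRightArrowIso L f Y),
    adj.map_comp_bijective_iff]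

variable [Closed W] [Closed X]

theorem isIso_pre_app_of_isIso_map (adj : L ⊣ R) (hf : IsIso (L.map f)) (A : S) :
    IsIso ((MonoidalClosed.pre f).app (R.obj A)) := by
  rw [isIso_pre_app_iff_bijective_whiskerRight_comp]
  intro Y
  rw [← bijective_map_whiskerRight_comp_iff adj]
  exact (isIso_iff_coyoneda_map_bijective _).1 inferInstance A

theorem isIso_map_of_isIso_pre_app_classifier (adj : L ⊣ R) (c : _root_.Classifier S)
    (hf : IsIso ((MonoidalClosed.pre f).app (R.obj c.Ω))) : IsIso (L.map f) := by
  rw [isIso_pre_app_iff_bijective_whiskerRight_comp] at hf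
  obtain ⟨θ, hθ⟩ :=
    ((bijective_map_whiskerRight_comp_iff adj W c.Ω).2 (hf W)).surjective
      (c.eqPredicate (L.obj W))
  have : Mono (L.map f) := c.mono_of_whiskerRight_comp_eq_eqPredicate hθ
  have bijective_comp : Function.Bijective (fun k : L.obj X ⟶ c.Ω ↦ L.map f ≫ k) := by
    rw [adj.map_comp_bijective_iff, ← bijective_whiskerRight_unit_comp_iff]
    exact hf (𝟙_ E)
  exact c.isIso_of_mono_of_injective_comp bijective_comp.injective

theorem internallyOrthogonal_R2_iff_iso_iff_all_general (adj : L ⊣ R)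
    (c : _root_.Classifier S) (f : W ⟶ X) :
    (IsIso ((MonoidalClosed.pre f).app (R.obj c.Ω)) ↔ IsIso (L.map f)) ∧
    (IsIso (L.map f) ↔ ∀ A : S, IsIso ((MonoidalClosed.pre f).app (R.obj A))) :=
  ⟨⟨isIso_map_of_isIso_pre_app_classifier adj c, fun h ↦ isIso_pre_app_of_isIso_map adj h c.Ω⟩,
    ⟨isIso_pre_app_of_isIso_map adj, fun h ↦ isIso_map_of_isIso_pre_app_classifier adj c (h c.Ω)⟩⟩

end ProductPreservingLeftAdjoint

/-- Let `E` be cartesian closed with finite limits, `S` an elementary topos with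
subobject classifier `2 = c.Ω`, and `R : S ⥤ E` a full and faithful functor with a
finite-product preserving left adjoint `L : E ⥤ S`.  For `f : W ⟶ X` in `E` the following
are equivalent: (1) `f` is internally orthogonal to `R 2`; (2) `L.map f` is an isomorphism;
(3) `f` is internally orthogonal to `R A` for every `A` in `S`. -/
theorem internallyOrthogonal_R2_iff_iso_iff_all
    {E : Type u} [Category.{v} E] [HasFiniteLimits E] [CartesianMonoidalCategory E]
    [MonoidalClosed E]
    {S : Type u'} [Category.{v'} S] [HasFiniteLimits S] [CartesianMonoidalCategory S]
    [MonoidalClosed S] (c : _root_.Classifier S)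
    (R : S ⥤ E) [R.Full] [R.Faithful] (L : E ⥤ S) (adj : L ⊣ R)
    [PreservesFiniteProducts L]
    {W X : E} (f : W ⟶ X) :
    (IsIso ((MonoidalClosed.pre f).app (R.obj c.Ω)) ↔ IsIso (L.map f)) ∧
    (IsIso (L.map f) ↔ ∀ A : S, IsIso ((MonoidalClosed.pre f).app (R.obj A))) :=
  internallyOrthogonal_R2_iff_iso_iff_all_general adj c f
end

section
/- Let p : E → S be a pre-cohesive geometric morphism between elementary toposes, let 2 be the subobject classifier of S, and let F be the least subtopos of E containing p^* 2. Then for every object A of S, the object p^* A belongs to F (i.e., the reflection unit of F at p^* A is an isomorphism). -/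
open CategoryTheory Category Limits MonoidalCategory

universe u v u' v' u₂ v₂

/-!
Write `W` for the morphisms inverted by the reflector of `F`; an object belongs to `F` iff it is
`W`-local. Since `p_!` preserves products and `p^*` is fully faithful, Frobenius reciprocity
`p_! (p^* A × X) ≅ A × p_! X` identifies maps `X ⟶ p^* (Z ^ A)` with maps `p^* A × X ⟶ p^* Z`,
and `W` is stable under `p^* A × -`, so `p^* (2 ^ A)` is `W`-local as soon as `p^* 2` is.
The singleton map `A ⟶ 2 ^ A` exhibits `A` as a pullback of `1 ⟶ 2 ⟵ 2 ^ A`; the right adjoint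
`p^*` preserves this pullback, and `W`-local objects are closed under limits.
-/

open CartesianMonoidalCategory ObjectProperty

section Singleton

variable {S : Type u} [Category.{v} S] [CartesianMonoidalCategory S]

/-- The internal equality predicate `A ⊗ A ⟶ Ω`: the characteristic map of the diagonal of `A`. -/
noncomputable def Classifier.equality (c : _root_.Classifier S) (A : S) : A ⊗ A ⟶ c.Ω :=
  (c.classifies (lift (𝟙 A) (𝟙 A)) inferInstance).choose

theorem Classifier.isPullback_equality (c : _root_.Classifier S) (A : S) :
    IsPullback (toUnit A) (lift (𝟙 A) (𝟙 A)) c.truth (c.equality A) :=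
  (c.classifies (lift (𝟙 A) (𝟙 A)) inferInstance).choose_spec.1

theorem Classifier.lift_comp_equality_eq_truth_iff (c : _root_.Classifier S) {X A : S}
    (a b : X ⟶ A) : lift a b ≫ c.equality A = toUnit X ≫ c.truth ↔ a = b := by
  constructor
  · intro h
    obtain ⟨d, -, hd⟩ := (c.isPullback_equality A).exists_lift (toUnit X) (lift a b) h.symm
    have hda : d = a := by simpa using congrArg (· ≫ fst A A) hd
    have hdb : d = b := by simpa using congrArg (· ≫ snd A A) hd
    exact hda.symm.trans hdb
  · rintro rfl
    have hdiag : lift a a = a ≫ lift (𝟙 A) (𝟙 A) := by simp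
    rw [hdiag, assoc, ← (c.isPullback_equality A).w, ← assoc, comp_toUnit]

variable [MonoidalClosed S]

/-- The singleton map `A ⟶ Ω ^ A`, the transpose of the equality predicate. -/
noncomputable def Classifier.singleton (c : _root_.Classifier S) (A : S) :
    A ⟶ (ihom A).obj c.Ω :=
  MonoidalClosed.curry (c.equality A)

instance Classifier.mono_singleton (c : _root_.Classifier S) (A : S) : Mono (c.singleton A) where
  right_cancellation {X} a b h := by
    have hwhisker : A ◁ a ≫ c.equality A = A ◁ b ≫ c.equality A := by
      apply MonoidalClosed.curry_injective
      simpa only [MonoidalClosed.curry_natural_left, singleton] using h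
    have hlift : lift a a ≫ c.equality A = lift a b ≫ c.equality A := by
      simpa using congrArg (lift a (𝟙 X) ≫ ·) hwhisker
    rw [← c.lift_comp_equality_eq_truth_iff, ← hlift, c.lift_comp_equality_eq_truth_iff]

theorem Classifier.prop_of_prop_ihom (c : _root_.Classifier S) (P : ObjectProperty S)
    [P.IsClosedUnderLimitsOfShape (Discrete.{0} PEmpty)]
    [P.IsClosedUnderLimitsOfShape WalkingCospan] {A : S}
    (hΩ : P c.Ω) (hpow : P ((ihom A).obj c.Ω)) : P A := by
  obtain ⟨χ, hχ, -⟩ := c.classifies (c.singleton A) inferInstance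
  have hunit : P (𝟙_ S) := P.prop_of_isTerminal _ isTerminalTensorUnit
  exact P.prop_of_isLimit hχ.isLimit (by rintro (_ | _ | _) <;> assumption)

end Singleton

section Local

variable {C : Type u} [Category.{v} C] {D : Type u'} [Category.{v'} D]

theorem isLocal_singleton_iff {X Y : C} (f : X ⟶ Y) (Z : C) :
    (ObjectProperty.singleton Z).isLocal f ↔ Function.Bijective fun g : Y ⟶ Z => f ≫ g := by
  simp [ObjectProperty.isLocal]

theorem isLocal_singleton_obj_iff {G : C ⥤ D} {R : D ⥤ C} (adj : G ⊣ R) {X Y : C} (f : X ⟶ Y)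
    (Z : D) : (ObjectProperty.singleton (R.obj Z)).isLocal f ↔
      (ObjectProperty.singleton Z).isLocal (G.map f) := by
  have hnat : adj.homEquiv X Z ∘ (fun g => G.map f ≫ g) =
      (fun g => f ≫ g) ∘ adj.homEquiv Y Z := by
    funext g
    exact adj.homEquiv_naturality_left f g
  rw [isLocal_singleton_iff, isLocal_singleton_iff,
    ← Function.Bijective.of_comp_iff _ (adj.homEquiv Y Z).bijective, ← hnat,
    Function.Bijective.of_comp_iff' (adj.homEquiv X Z).bijective]

theorem isIso_unit_app_iff_isLocal {L : C ⥤ D} {i : D ⥤ C} [i.Full] [i.Faithful] (adj : L ⊣ i)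
    (Z : C) : IsIso (adj.unit.app Z) ↔
      ((MorphismProperty.isomorphisms D).inverseImage L).isLocal Z := by
  set W := (MorphismProperty.isomorphisms D).inverseImage L
  have hlocal (B : D) : W.isLocal (i.obj B) := by
    have hW : isLocal (· ∈ Set.range i.obj) = W := isLocal_eq_inverseImage_isomorphisms adj
    exact hW ▸ le_isLocal_isLocal _ _ ⟨B, rfl⟩
  constructor
  · intro _
    exact W.isLocal.prop_of_iso (asIso (adj.unit.app Z)).symm (hlocal (L.obj Z))
  · intro hZ
    have hunit : W (adj.unit.app Z) := inferInstanceAs (IsIso (L.map (adj.unit.app Z)))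
    exact (isLocal_iff_isIso _ _ hZ (hlocal (L.obj Z))).1 (W.le_isLocal_isLocal _ hunit)

end Local

section Exponential

variable {E : Type u} [Category.{v} E] [CartesianMonoidalCategory E]

theorem isIso_map_whiskerLeft {F : Type u'} [Category.{v'} F] (L : E ⥤ F)
    [PreservesLimitsOfShape (Discrete WalkingPair) L] (A : E) {X Y : E} (f : X ⟶ Y)
    [IsIso (L.map f)] : IsIso (L.map (A ◁ f)) := by
  have hprod (B : E) : IsLimit (BinaryFan.mk (L.map (fst A B)) (L.map (snd A B))) :=
    mapIsLimitOfPreservesOfIsLimit L _ _ (tensorProductIsBinaryProduct A B)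
  let hcomp := BinaryFan.isLimitCompRightIso _ (L.map f) (hprod X)
  let e : L.obj (A ⊗ X) ≅ L.obj (A ⊗ Y) := hcomp.conePointUniqueUpToIso (hprod Y)
  have he_fst : e.hom ≫ L.map (fst A Y) = L.map (fst A X) :=
    hcomp.conePointUniqueUpToIso_hom_comp (hprod Y) ⟨.left⟩
  have he_snd : e.hom ≫ L.map (snd A Y) = L.map (snd A X) ≫ L.map f :=
    hcomp.conePointUniqueUpToIso_hom_comp (hprod Y) ⟨.right⟩
  have hmap_fst : L.map (A ◁ f) ≫ L.map (fst A Y) = L.map (fst A X) := by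
    rw [← L.map_comp, whiskerLeft_fst]
  have hmap_snd : L.map (A ◁ f) ≫ L.map (snd A Y) = L.map (snd A X) ≫ L.map f := by
    rw [← L.map_comp, whiskerLeft_snd, L.map_comp]
  have he : L.map (A ◁ f) = e.hom := BinaryFan.IsLimit.hom_ext (hprod Y)
    (hmap_fst.trans he_fst.symm) (hmap_snd.trans he_snd.symm)
  rw [he]
  infer_instance

variable {S : Type u'} [Category.{v'} S] [CartesianMonoidalCategory S]
  {G : E ⥤ S} {R : S ⥤ E} [R.Full] [R.Faithful] [PreservesLimitsOfShape (Discrete WalkingPair) G]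

/-- The Frobenius reciprocity isomorphism `G (R A ⊗ X) ≅ A ⊗ G X`, natural in `X`, for a fully
faithful `R` whose left adjoint `G` preserves binary products. Mathlib's `frobeniusMorphism`
requires the morphisms of both categories to live in the same universe. -/
noncomputable def frobeniusIso (adj : G ⊣ R) (A : S) :
    tensorLeft (R.obj A) ⋙ G ≅ G ⋙ tensorLeft A :=
  prodComparisonNatIso G (R.obj A) ≪≫
    Functor.isoWhiskerLeft G ((curriedTensor S).mapIso (asIso (adj.counit.app A)))

variable [MonoidalClosed S]

theorem isLocal_singleton_obj_ihom_iff (adj : G ⊣ R) (A Z : S) {X Y : E} (f : X ⟶ Y) :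
    (ObjectProperty.singleton (R.obj ((ihom A).obj Z))).isLocal f ↔
      (ObjectProperty.singleton (R.obj Z)).isLocal (R.obj A ◁ f) :=
  calc
    _ ↔ (ObjectProperty.singleton Z).isLocal (A ◁ G.map f) :=
      isLocal_singleton_obj_iff (adj.comp (ihom.adjunction A)) f Z
    _ ↔ (ObjectProperty.singleton Z).isLocal (G.map (R.obj A ◁ f)) :=
      (MorphismProperty.arrow_mk_iso_iff _
        (Arrow.isoOfNatIso (frobeniusIso adj A) (Arrow.mk f))).symm
    _ ↔ _ := (isLocal_singleton_obj_iff adj _ Z).symm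

theorem isLocal_obj_ihom (adj : G ⊣ R) {W : MorphismProperty E} {A Z : S}
    (hW : ∀ ⦃X Y : E⦄ (f : X ⟶ Y), W f → W (R.obj A ◁ f)) (hZ : W.isLocal (R.obj Z)) :
    W.isLocal (R.obj ((ihom A).obj Z)) := by
  intro X Y f hf
  rw [← isLocal_singleton_iff, isLocal_singleton_obj_ihom_iff adj, isLocal_singleton_iff]
  exact hZ _ (hW f hf)

end Exponential

theorem least_subtopos_contains_pStar_general
    {E : Type u} [Category.{v} E] [CartesianMonoidalCategory E]
    {S : Type u'} [Category.{v'} S] [CartesianMonoidalCategory S] [MonoidalClosed S]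
    (cS : _root_.Classifier S)
    {pShriek : E ⥤ S} {pStar : S ⥤ E} (adj : pShriek ⊣ pStar) [pStar.Full] [pStar.Faithful]
    [PreservesLimitsOfShape (Discrete WalkingPair) pShriek]
    {F : Type u₂} [Category.{v₂} F] {iF : F ⥤ E} [iF.Full] [iF.Faithful]
    {LF : E ⥤ F} (adjF : LF ⊣ iF) [PreservesLimitsOfShape (Discrete WalkingPair) LF]
    (hΩ : IsIso (adjF.unit.app (pStar.obj cS.Ω))) (A : S) :
    IsIso (adjF.unit.app (pStar.obj A)) := by
  rw [isIso_unit_app_iff_isLocal adjF] at hΩ ⊢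
  set W := (MorphismProperty.isomorphisms F).inverseImage LF
  have hW ⦃X Y : E⦄ (f : X ⟶ Y) (hf : W f) : W (pStar.obj A ◁ f) :=
    have : IsIso (LF.map f) := hf
    isIso_map_whiskerLeft LF (pStar.obj A) f
  have hpow : W.isLocal (pStar.obj ((ihom A).obj cS.Ω)) := isLocal_obj_ihom adj hW hΩ
  have : PreservesLimitsOfSize.{0, 0} pStar := adj.rightAdjoint_preservesLimits
  exact cS.prop_of_prop_ihom (W.isLocal.inverseImage pStar) hΩ hpow

/-- Let `p : E ⟶ S` be a pre-cohesive geometric morphism between elementary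
toposes, `2 = cS.Ω` the subobject classifier of `S`, and `F` (inclusion `iF`, reflector
`LF ⊣ iF` preserving finite limits) the least subtopos of `E` containing `p^* 2`.  Then for
every object `A` of `S`, the object `p^* A` belongs to `F`, i.e. the reflection unit of `F`
at `p^* A` is an isomorphism. -/
theorem least_subtopos_contains_pStar
    {E : Type u} [Category.{v} E] [HasFiniteLimits E] [CartesianMonoidalCategory E]
    [MonoidalClosed E] (cE : _root_.Classifier E)
    {S : Type u'} [Category.{v'} S] [HasFiniteLimits S] [CartesianMonoidalCategory S]
    [MonoidalClosed S] (cS : _root_.Classifier S)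
    (pShriek : E ⥤ S) (pStar : S ⥤ E) (pLower : E ⥤ S) (pUpper : S ⥤ E)
    (adj₁ : pShriek ⊣ pStar) (adj₂ : pStar ⊣ pLower) (adj₃ : pLower ⊣ pUpper)
    [PreservesFiniteLimits pStar] [pStar.Full] [pStar.Faithful]
    (hUnitMono : ∀ A : S, Mono (adj₂.unit.app A))
    (hCounitMono : ∀ X : E, Mono (adj₂.counit.app X))
    [PreservesFiniteProducts pShriek]
    {F : Type u₂} [Category.{v₂} F] (iF : F ⥤ E) [iF.Full] [iF.Faithful]
    (LF : E ⥤ F) (adjF : LF ⊣ iF) [PreservesFiniteLimits LF]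
    (hZ : IsIso (adjF.unit.app (pStar.obj cS.Ω)))
    (hleast : ∀ {F' : Type u₂} [Category.{v₂} F'] (i' : F' ⥤ E), i'.Full → i'.Faithful →
      ∀ (L' : E ⥤ F') (adj' : L' ⊣ i'), PreservesFiniteLimits L' →
      IsIso (adj'.unit.app (pStar.obj cS.Ω)) →
      ∀ X : E, IsIso (adjF.unit.app X) → IsIso (adj'.unit.app X))
    (A : S) :
    IsIso (adjF.unit.app (pStar.obj A)) := by
  exact least_subtopos_contains_pStar_general cS adj₁ adjF hZ A
end
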